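/- Let f : ℝⁿ → ℝⁿ be continuously differentiable, F : ℝᵐ ⇉ ℝᵐ a set-valued map with closed graph, B an injective n×m real matrix and C an m×n real matrix. Define Φ(z) = f(z) + B F(Cz), the solution mapping S(p) = { z : p ∈ Φ(z) }, F_C(u) = F(u) if u = Cz for some z ∈ ℝⁿ and F_C(u) = ∅ otherwise. Let (z̄, p̄) ∈ gph Φ and set v̄ = (BᵀB)⁻¹Bᵀ(p̄ − f(z̄)). Then S has the Aubin property at p̄ for z̄ if and only if the implication [0 ∈ ∇f(z̄)ᵀ ξ + Cᵀ D*F_C(Cz̄ | v̄)(Bᵀ ξ) ⟹ ξ = 0] holds; moreover lip(S; p̄|z̄) = sup{ ‖ξ‖ : (∇f(z̄)ᵀ ξ + Cᵀ D*F_C(Cz̄ | v̄)(Bᵀ ξ)) ∩ 𝔹 ≠ ∅ }, where 𝔹 is the closed unit ball of ℝⁿ. -/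

import Mathlib

open Filter Topology Set Metric RealInnerProductSpace
open scoped ENNReal NNReal Pointwise

noncomputable section

/-- Graph of a set-valued map. -/
def svGraph {α β : Type*} (F : α → Set β) : Set (α × β) := {p | p.2 ∈ F p.1}

/-- Inverse of a set-valued map. -/
def svInv {α β : Type*} (F : α → Set β) : β → Set α := fun y => {x | y ∈ F x}

/-- Local closedness of a set at a point of a metric space. -/
def LocClosedAt {α : Type*} [PseudoMetricSpace α] (s : Set α) (p : α) : Prop :=
  ∃ r : ℝ, 0 < r ∧ IsClosed (s ∩ Metric.closedBall p r)

section Cones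

variable {X : Type*} [NormedAddCommGroup X] [NormedSpace ℝ X]

/-- Bouligand-Severi contingent cone. -/
def contingentCone (Ω : Set X) (x : X) : Set X :=
  { u | ∃ (t : ℕ → ℝ) (uk : ℕ → X), (∀ k, 0 < t k) ∧
      Tendsto t atTop (𝓝 0) ∧ Tendsto uk atTop (𝓝 u) ∧ ∀ k, x + t k • uk k ∈ Ω }

/-- Bouligand paratingent cone. -/
def paratingentCone (Ω : Set X) (x : X) : Set X :=
  { u | ∃ (t : ℕ → ℝ) (uk : ℕ → X) (xk : ℕ → X), (∀ k, 0 < t k) ∧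
      Tendsto t atTop (𝓝 0) ∧ Tendsto uk atTop (𝓝 u) ∧
      (∀ k, xk k ∈ Ω) ∧ Tendsto xk atTop (𝓝 x) ∧ ∀ k, xk k + t k • uk k ∈ Ω }

end Cones

section NormalCones

variable {X : Type*} [NormedAddCommGroup X] [InnerProductSpace ℝ X]

/-- Fréchet (regular) normal cone. -/
def frechetNormalCone (Ω : Set X) (x : X) : Set X :=
  { v | ∀ ε : ℝ, 0 < ε → ∃ δ : ℝ, 0 < δ ∧ ∀ y ∈ Ω, ‖y - x‖ < δ →
      ⟪v, y - x⟫ ≤ ε * ‖y - x‖ }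

/-- Limiting (Mordukhovich) normal cone. -/
def limitingNormalCone (Ω : Set X) (x : X) : Set X :=
  { v | ∃ (xk : ℕ → X) (vk : ℕ → X), (∀ k, xk k ∈ Ω) ∧
      Tendsto xk atTop (𝓝 x) ∧ Tendsto vk atTop (𝓝 v) ∧
      ∀ k, vk k ∈ frechetNormalCone Ω (xk k) }

end NormalCones

section Derivatives

variable {E F : Type*} [NormedAddCommGroup E] [NormedSpace ℝ E]
  [NormedAddCommGroup F] [NormedSpace ℝ F]

/-- Graphical derivative. -/
def gDeriv (Fm : E → Set F) (x : E) (y : F) : E → Set F := fun u =>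
  {v | (u, v) ∈ contingentCone (svGraph Fm) (x, y)}

/-- Strict graphical derivative. -/
def sgDeriv (Fm : E → Set F) (x : E) (y : F) : E → Set F := fun u =>
  {v | (u, v) ∈ paratingentCone (svGraph Fm) (x, y)}

end Derivatives

section Coderivative

variable {E F : Type*} [NormedAddCommGroup E] [InnerProductSpace ℝ E]
  [NormedAddCommGroup F] [InnerProductSpace ℝ F]

/-- Coderivative: `w ∈ D*F(x|y)(z)` iff `(w, -z)` is in the limiting normal cone
to the graph of `F` (viewed inside the `ℓ²` product) at `(x, y)`. -/
def coDeriv (Fm : E → Set F) (x : E) (y : F) : F → Set E := fun z =>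
  { w | (WithLp.equiv 2 (E × F)).symm (w, -z) ∈
      limitingNormalCone ((WithLp.equiv 2 (E × F)).symm '' svGraph Fm)
        ((WithLp.equiv 2 (E × F)).symm (x, y)) }

end Coderivative

section Norms

variable {E F : Type*} [NormedAddCommGroup E] [NormedAddCommGroup F]

/-- Outer norm of a (positively homogeneous) set-valued map. -/
def outerNormSV (H : E → Set F) : ℝ≥0∞ :=
  ⨆ (x : E) (_ : ‖x‖ ≤ 1) (y : F) (_ : y ∈ H x), (‖y‖₊ : ℝ≥0∞)

/-- Inner norm of a (positively homogeneous) set-valued map. -/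
def innerNormSV (H : E → Set F) : ℝ≥0∞ :=
  ⨆ (x : E) (_ : ‖x‖ ≤ 1), ⨅ (y : F) (_ : y ∈ H x), (‖y‖₊ : ℝ≥0∞)

/-- Positive homogeneity of a set-valued map. -/
def PosHomogeneous {E F : Type*} [NormedAddCommGroup E] [NormedSpace ℝ E]
    [NormedAddCommGroup F] [NormedSpace ℝ F] (H : E → Set F) : Prop :=
  (0 : F) ∈ H 0 ∧ ∀ (c : ℝ), 0 < c → ∀ x, H (c • x) = c • (H x)

end Norms

section Stability

variable {E F : Type*} [NormedAddCommGroup E] [NormedAddCommGroup F]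

/-- Metric regularity with constant `κ`. -/
def MetrRegWith (κ : ℝ≥0) (Fm : E → Set F) (xbar : E) (ybar : F) : Prop :=
  ∃ U ∈ 𝓝 xbar, ∃ V ∈ 𝓝 ybar, ∀ x ∈ U, ∀ y ∈ V,
    EMetric.infEdist x (svInv Fm y) ≤ (κ : ℝ≥0∞) * EMetric.infEdist y (Fm x)

/-- The regularity modulus `reg (F; xbar|ybar)`. -/
def regMod (Fm : E → Set F) (xbar : E) (ybar : F) : ℝ≥0∞ :=
  ⨅ (κ : ℝ≥0) (_ : MetrRegWith κ Fm xbar ybar), (κ : ℝ≥0∞)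

/-- Aubin property with constant `κ`. -/
def AubinWith (κ : ℝ≥0) (S : F → Set E) (ybar : F) (xbar : E) : Prop :=
  ∃ V ∈ 𝓝 ybar, ∃ U ∈ 𝓝 xbar, ∀ y ∈ V, ∀ y' ∈ V, ∀ x ∈ S y' ∩ U,
    ∃ x' ∈ S y, ‖x - x'‖ ≤ (κ : ℝ) * ‖y - y'‖

/-- The Lipschitz modulus `lip (S; ybar|xbar)`. -/
def lipMod (S : F → Set E) (ybar : F) (xbar : E) : ℝ≥0∞ :=
  ⨅ (κ : ℝ≥0) (_ : AubinWith κ S ybar xbar), (κ : ℝ≥0∞)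

/-- Strong metric subregularity with constant `κ`. -/
def SubregWith (κ : ℝ≥0) (Fm : E → Set F) (xbar : E) (ybar : F) : Prop :=
  ∃ U ∈ 𝓝 xbar, ∀ x ∈ U, (‖x - xbar‖₊ : ℝ≥0∞) ≤ (κ : ℝ≥0∞) * EMetric.infEdist ybar (Fm x)

/-- The subregularity modulus `subreg (F; xbar|ybar)`. -/
def subregMod (Fm : E → Set F) (xbar : E) (ybar : F) : ℝ≥0∞ :=
  ⨅ (κ : ℝ≥0) (_ : SubregWith κ Fm xbar ybar), (κ : ℝ≥0∞)

/-- Isolated calmness with constant `κ`. -/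
def CalmWith (κ : ℝ≥0) (S : F → Set E) (ybar : F) (xbar : E) : Prop :=
  ∃ V ∈ 𝓝 ybar, ∃ U ∈ 𝓝 xbar, ∀ y ∈ V, ∀ x ∈ S y ∩ U, ‖x - xbar‖ ≤ (κ : ℝ) * ‖y - ybar‖

/-- The calmness modulus `clm (S; ybar|xbar)`. -/
def clmMod (S : F → Set E) (ybar : F) (xbar : E) : ℝ≥0∞ :=
  ⨅ (κ : ℝ≥0) (_ : CalmWith κ S ybar xbar), (κ : ℝ≥0∞)

/-- Strong metric regularity: metric regularity plus a single-valued localization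
of the inverse. -/
def StrongMetrReg (Fm : E → Set F) (xbar : E) (ybar : F) : Prop :=
  (∃ κ : ℝ≥0, MetrRegWith κ Fm xbar ybar) ∧
  ∃ U ∈ 𝓝 xbar, ∃ V ∈ 𝓝 ybar, ∀ y ∈ V, (svInv Fm y ∩ U).Subsingleton

end Stability

section FrechetNormalFunctionals

variable {X Y : Type*} [NormedAddCommGroup X] [NormedSpace ℝ X]
  [NormedAddCommGroup Y] [NormedSpace ℝ Y]

/-- A continuous linear functional is a Fréchet normal to `Ω` at `x`. This version of the Fréchet
normal cone depends only on the equivalence class of the norm. -/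
def IsFrechetNormal (Ω : Set X) (x : X) (l : X →L[ℝ] ℝ) : Prop :=
  ∀ ε : ℝ, 0 < ε → ∀ᶠ y in 𝓝[Ω] x, l (y - x) ≤ ε * ‖y - x‖

/-- Transfer of Fréchet normals along a map that is differentiable at the base point. -/
theorem IsFrechetNormal.of_mapsTo {Ω₁ : Set X} {Ω₂ : Set Y} {x : X} {g : X → Y}
    {g' : X →L[ℝ] Y} {h : X → ℝ} {l₁ : X →L[ℝ] ℝ} {l₂ : Y →L[ℝ] ℝ}
    (hg : HasFDerivAt g g' x) (hh : HasFDerivAt h l₁ x) (hmaps : MapsTo g Ω₁ Ω₂)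
    (heq : ∀ y ∈ Ω₁, h y - h x = l₂ (g y - g x))
    (hl : IsFrechetNormal Ω₂ (g x) l₂) : IsFrechetNormal Ω₁ x l₁ := by
  intro ε hε
  obtain ⟨c, hc, hcb⟩ := hg.isBigO_sub.exists_pos
  have hlo := hh.isLittleO.def (half_pos hε)
  have htend : Tendsto g (𝓝[Ω₁] x) (𝓝[Ω₂] (g x)) :=
    hg.continuousAt.continuousWithinAt.tendsto_nhdsWithin hmaps
  have h2 := htend.eventually (hl (ε / 2 / c) (by positivity))
  filter_upwards [h2, hcb.bound.filter_mono nhdsWithin_le_nhds,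
    hlo.filter_mono nhdsWithin_le_nhds, self_mem_nhdsWithin] with y h2 h3 h4 h5
  rw [Real.norm_eq_abs, abs_le] at h4
  have h6 : ε / 2 / c * ‖g y - g x‖ ≤ ε / 2 * ‖y - x‖ := by
    calc ε / 2 / c * ‖g y - g x‖ ≤ ε / 2 / c * (c * ‖y - x‖) := by gcongr
      _ = ε / 2 * ‖y - x‖ := by field_simp
  have := heq y h5
  linarith [h4.1]

/-- Minus the derivative at a minimizer is a Fréchet normal. -/
theorem IsMinOn.isFrechetNormal_neg {Ω : Set X} {x : X} {φ : X → ℝ} {l : X →L[ℝ] ℝ}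
    (hmin : IsMinOn φ Ω x) (hφ : HasFDerivAt φ l x) : IsFrechetNormal Ω x (-l) := by
  intro ε hε
  filter_upwards [(hφ.isLittleO.def hε).filter_mono nhdsWithin_le_nhds,
    self_mem_nhdsWithin] with y h1 h2
  rw [Real.norm_eq_abs, abs_le] at h1
  have : φ x ≤ φ y := hmin h2
  simp only [_root_.neg_apply]
  linarith [h1.2]

theorem IsFrechetNormal.smul {Ω : Set X} {x : X} {l : X →L[ℝ] ℝ} (hl : IsFrechetNormal Ω x l)
    {c : ℝ} (hc : 0 < c) : IsFrechetNormal Ω x (c • l) := by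
  intro ε hε
  filter_upwards [hl (ε / c) (by positivity)] with y hy
  calc (c • l) (y - x) = c * l (y - x) := rfl
    _ ≤ c * (ε / c * ‖y - x‖) := by gcongr
    _ = ε * ‖y - x‖ := by field_simp

theorem IsFrechetNormal.eq_zero_of_mem_submodule {K : Submodule ℝ X} {l : X →L[ℝ] ℝ}
    (h : IsFrechetNormal (K : Set X) 0 l) {d : X} (hd : d ∈ K) : l d = 0 := by
  have key : ∀ d ∈ K, l d ≤ 0 := by
    intro d hd
    suffices H : ∀ ε : ℝ, 0 < ε → l d ≤ 0 + ε by exact le_of_forall_pos_le_add H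
    intro ε hε
    have hε' : 0 < ε / (‖d‖ + 1) := by positivity
    have htend : Tendsto (fun t : ℝ => t • d) (𝓝[>] 0) (𝓝[(K : Set X)] 0) := by
      refine tendsto_nhdsWithin_iff.2 ⟨?_, Eventually.of_forall fun t => K.smul_mem t hd⟩
      have : Continuous fun t : ℝ => t • d := by fun_prop
      exact (this.tendsto' 0 0 (zero_smul ℝ d)).mono_left nhdsWithin_le_nhds
    obtain ⟨t, h1, ht⟩ := ((htend.eventually (h _ hε')).and
      (self_mem_nhdsWithin : Ioi (0 : ℝ) ∈ 𝓝[>] 0)).exists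
    have ht : 0 < t := ht
    rw [sub_zero, map_smul, smul_eq_mul, norm_smul, Real.norm_of_nonneg ht.le] at h1
    have h2 : t * l d ≤ t * (ε / (‖d‖ + 1) * ‖d‖) := by linarith
    have h3 : ε / (‖d‖ + 1) * ‖d‖ ≤ ε := by
      rw [div_mul_eq_mul_div, div_le_iff₀ (by positivity)]
      nlinarith [norm_nonneg d]
    linarith [le_of_mul_le_mul_left h2 ht]
  have h1 := key (-d) (K.neg_mem hd)
  rw [map_neg] at h1
  linarith [key d hd]

end FrechetNormalFunctionals

section PairFunctionals

variable {E F : Type*} [NormedAddCommGroup E] [InnerProductSpace ℝ E]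
  [NormedAddCommGroup F] [InnerProductSpace ℝ F]

/-- The functional `(x, y) ↦ ⟪a, x⟫ + ⟪b, y⟫`. -/
def pairFunctional (a : E) (b : F) : E × F →L[ℝ] ℝ :=
  (innerSL ℝ a).comp (ContinuousLinearMap.fst ℝ E F) +
    (innerSL ℝ b).comp (ContinuousLinearMap.snd ℝ E F)

@[simp]
theorem pairFunctional_apply (a : E) (b : F) (q : E × F) :
    pairFunctional a b q = ⟪a, q.1⟫ + ⟪b, q.2⟫ := rfl

theorem smul_pairFunctional (c : ℝ) (a : E) (b : F) :
    c • pairFunctional a b = pairFunctional (c • a) (c • b) := by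
  ext q <;> simp [pairFunctional]

theorem neg_pairFunctional (a : E) (b : F) :
    -pairFunctional a b = pairFunctional (-a) (-b) := by
  ext q <;> simp [pairFunctional]

theorem mem_frechetNormalCone_iff_isFrechetNormal (Ω : Set E) (x v : E) :
    v ∈ frechetNormalCone Ω x ↔ IsFrechetNormal Ω x (innerSL ℝ v) := by
  simp only [frechetNormalCone, IsFrechetNormal, Set.mem_ofPred_eq,
    Metric.nhdsWithin_basis_ball.eventually_iff, Set.mem_inter_iff, Metric.mem_ball,
    dist_eq_norm, innerSL_apply_apply]
  exact forall₂_congr fun ε _ => exists_congr fun δ => and_congr_right fun _ =>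
    ⟨fun h y hy => h y hy.2 hy.1, fun h y hy hyx => h ⟨hyx, hy⟩⟩

theorem toLp_mem_frechetNormalCone_iff (Ω : Set (E × F)) (q : E × F) (a : E) (b : F) :
    (WithLp.equiv 2 (E × F)).symm (a, b) ∈
        frechetNormalCone ((WithLp.equiv 2 (E × F)).symm '' Ω) ((WithLp.equiv 2 (E × F)).symm q) ↔
      IsFrechetNormal Ω q (pairFunctional a b) := by
  rw [mem_frechetNormalCone_iff_isFrechetNormal]
  let e := WithLp.prodContinuousLinearEquiv 2 ℝ E F
  constructor
  · intro h
    refine IsFrechetNormal.of_mapsTo (g := e.symm) e.symm.hasFDerivAt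
      (pairFunctional a b).hasFDerivAt (fun y hy => mem_image_of_mem _ hy) ?_ h
    intro y _
    simp [e, WithLp.prod_inner_apply, inner_sub_right]
  · intro h
    refine IsFrechetNormal.of_mapsTo (g := e) e.hasFDerivAt
      (innerSL ℝ _).hasFDerivAt ?_ ?_ h
    · rintro _ ⟨y, hy, rfl⟩
      exact hy
    intro y _
    simp [e, WithLp.prod_inner_apply, inner_sub_right]
    ring

/-- Limiting normals to a subset of a product, without the `ℓ²` structure. -/
def IsLimitingNormal (Ω : Set (E × F)) (q : E × F) (a : E) (b : F) : Prop :=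
  ∃ (qk : ℕ → E × F) (ak : ℕ → E) (bk : ℕ → F), (∀ k, qk k ∈ Ω) ∧ Tendsto qk atTop (𝓝 q) ∧
    Tendsto ak atTop (𝓝 a) ∧ Tendsto bk atTop (𝓝 b) ∧
    ∀ k, IsFrechetNormal Ω (qk k) (pairFunctional (ak k) (bk k))

theorem mem_coDeriv_iff (G : E → Set F) (x : E) (y z : F) (w : E) :
    w ∈ coDeriv G x y z ↔ IsLimitingNormal (svGraph G) (x, y) w (-z) := by
  have hcont := (WithLp.prodContinuousLinearEquiv 2 ℝ E F).continuous
  have hcont' := (WithLp.prodContinuousLinearEquiv 2 ℝ E F).symm.continuous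
  constructor
  · rintro ⟨qk, vk, hq, hqt, hvt, hn⟩
    refine ⟨fun k => WithLp.ofLp (qk k), fun k => (vk k).fst, fun k => (vk k).snd, ?_,
      (hcont.tendsto _).comp hqt, ?_, ?_, fun k => ?_⟩
    · intro k
      obtain ⟨p, hp, hpq⟩ := hq k
      change WithLp.ofLp (qk k) ∈ svGraph G
      rw [← hpq]
      exact hp
    · exact (continuous_fst.tendsto _).comp ((hcont.tendsto _).comp hvt)
    · exact (continuous_snd.tendsto _).comp ((hcont.tendsto _).comp hvt)
    · exact (toLp_mem_frechetNormalCone_iff _ _ _ _).1 (hn k)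
  · rintro ⟨qk, ak, bk, hq, hqt, hat, hbt, hn⟩
    exact ⟨fun k => (WithLp.equiv 2 (E × F)).symm (qk k),
      fun k => (WithLp.equiv 2 (E × F)).symm (ak k, bk k), fun k => mem_image_of_mem _ (hq k),
      (hcont'.tendsto _).comp hqt, (hcont'.tendsto _).comp (hat.prodMk_nhds hbt),
      fun k => (toLp_mem_frechetNormalCone_iff _ _ _ _).2 (hn k)⟩

theorem IsLimitingNormal.smul {Ω : Set (E × F)} {q : E × F} {a : E} {b : F}
    (h : IsLimitingNormal Ω q a b) {c : ℝ} (hc : 0 < c) :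
    IsLimitingNormal Ω q (c • a) (c • b) := by
  obtain ⟨qk, ak, bk, hq, hqt, hat, hbt, hn⟩ := h
  refine ⟨qk, fun k => c • ak k, fun k => c • bk k, hq, hqt, hat.const_smul c, hbt.const_smul c,
    fun k => ?_⟩
  rw [← smul_pairFunctional]
  exact (hn k).smul hc

/-- Fréchet normals with bounded components at points converging to `q` accumulate at a
limiting normal. -/
theorem exists_isLimitingNormal_of_approx [FiniteDimensional ℝ E] [FiniteDimensional ℝ F]
    {Ω : Set (E × F)} {q : E × F} {rk : ℕ → ℝ} {r : ℝ} (hr : Tendsto rk atTop (𝓝 r))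
    (h : ∀ k : ℕ, ∃ p ∈ Ω, ∃ (a : E) (b : F), ‖p - q‖ ≤ 1 / ((k : ℝ) + 1) ∧
      IsFrechetNormal Ω p (pairFunctional a b) ∧ ‖a‖ ≤ rk k ∧ ‖b‖ = 1) :
    ∃ (a : E) (b : F), IsLimitingNormal Ω q a b ∧ ‖a‖ ≤ r ∧ ‖b‖ = 1 := by
  choose p hp a b hpq hn ha hb using h
  obtain ⟨M, hM⟩ := hr.bddAbove_range
  have hK : IsCompact (closedBall (0 : E) M ×ˢ closedBall (0 : F) 1) :=
    (isCompact_closedBall _ _).prod (isCompact_closedBall _ _)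
  obtain ⟨⟨a₀, b₀⟩, -, σ, hσ, hlim⟩ := hK.tendsto_subseq (x := fun k => (a k, b k)) fun k =>
    ⟨mem_closedBall_zero_iff.2 ((ha k).trans (hM (mem_range_self k))),
      mem_closedBall_zero_iff.2 (hb k).le⟩
  have hat : Tendsto (fun k => a (σ k)) atTop (𝓝 a₀) := (continuous_fst.tendsto _).comp hlim
  have hbt : Tendsto (fun k => b (σ k)) atTop (𝓝 b₀) := (continuous_snd.tendsto _).comp hlim
  have hpt : Tendsto p atTop (𝓝 q) := by
    rw [tendsto_iff_norm_sub_tendsto_zero]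
    exact squeeze_zero (fun _ => norm_nonneg _) hpq tendsto_one_div_add_atTop_nhds_zero_nat
  refine ⟨a₀, b₀, ⟨fun k => p (σ k), fun k => a (σ k), fun k => b (σ k), fun k => hp _,
    hpt.comp hσ.tendsto_atTop, hat, hbt, fun k => hn _⟩, ?_, ?_⟩
  · exact le_of_tendsto_of_tendsto' hat.norm (hr.comp hσ.tendsto_atTop) fun k => ha _
  · refine tendsto_nhds_unique hbt.norm ?_
    simp [hb]

end PairFunctionals

section MordukhovichCriterion

variable {E F : Type*} [NormedAddCommGroup E] [InnerProductSpace ℝ E]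
  [NormedAddCommGroup F] [InnerProductSpace ℝ F]

theorem AubinWith.eventually_norm_le {κ : ℝ≥0} {Φ : E → Set F} {xbar : E} {ybar : F}
    (h : AubinWith κ (svInv Φ) ybar xbar) :
    ∀ᶠ q in 𝓝 (xbar, ybar), q ∈ svGraph Φ → ∀ (a : E) (b : F),
      IsFrechetNormal (svGraph Φ) q (pairFunctional a b) → ‖b‖ ≤ κ * ‖a‖ := by
  obtain ⟨V, hV, U, hU, hVU⟩ := h
  filter_upwards [continuous_fst.continuousAt.eventually hU,
    continuous_snd.continuousAt.eventually (eventually_mem_nhds_iff.2 hV)]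
  rintro ⟨x, y⟩ hx hy hxy a b hn
  simp only at hx hy
  rcases eq_or_ne b 0 with rfl | hb
  · simp only [norm_zero]
    positivity
  have hb' : 0 < ‖b‖ := norm_pos_iff.2 hb
  suffices H : ∀ ε : ℝ, 0 < ε → ‖b‖ ≤ κ * ‖a‖ + ε by exact le_of_forall_pos_le_add H
  intro ε hε
  have hκ : (0 : ℝ) < κ + 1 := by positivity
  obtain ⟨δ, hδ, hball⟩ := Metric.nhdsWithin_basis_ball.eventually_iff.1
    (hn (ε / (κ + 1)) (by positivity))
  have hcont : Continuous fun t : ℝ => y + t • b := by fun_prop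
  have hcont' : Continuous fun t : ℝ => (κ + 1) * (t * ‖b‖) := by fun_prop
  have e1 : ∀ᶠ t in 𝓝 (0 : ℝ), y + t • b ∈ V :=
    hcont.continuousAt.eventually (by simpa using hy)
  have e2 : ∀ᶠ t in 𝓝 (0 : ℝ), (κ + 1) * (t * ‖b‖) < δ :=
    (hcont'.tendsto' 0 0 (by simp)).eventually_lt_const hδ
  obtain ⟨t, ⟨ht1, ht2⟩, ht⟩ := ((e1.and e2).filter_mono nhdsWithin_le_nhds |>.and
    (self_mem_nhdsWithin : Ioi (0 : ℝ) ∈ 𝓝[>] 0)).exists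
  have ht : 0 < t := ht
  obtain ⟨x', hx', hle⟩ := hVU (y + t • b) ht1 y (mem_of_mem_nhds hy) x ⟨hxy, hx⟩
  rw [add_sub_cancel_left, norm_smul, Real.norm_eq_abs, abs_of_pos ht] at hle
  have hnorm : ‖(x', y + t • b) - (x, y)‖ ≤ (κ + 1) * (t * ‖b‖) := by
    have : 0 ≤ t * ‖b‖ := by positivity
    have h' : 0 ≤ κ * (t * ‖b‖) := by positivity
    rw [Prod.mk_sub_mk, add_sub_cancel_left, Prod.norm_mk, norm_smul, Real.norm_eq_abs,
      abs_of_pos ht, norm_sub_rev]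
    exact max_le (by linarith) (by linarith)
  have hmain := hball ⟨by rw [mem_ball, dist_eq_norm]; exact hnorm.trans_lt ht2, hx'⟩
  rw [pairFunctional_apply] at hmain
  simp only [Prod.mk_sub_mk, add_sub_cancel_left, inner_smul_right, real_inner_self_eq_norm_sq]
    at hmain hnorm
  have h1 : -(‖a‖ * (κ * (t * ‖b‖))) ≤ ⟪a, x' - x⟫ := by
    have h2 := abs_le.1 (abs_real_inner_le_norm a (x' - x))
    have h3 : ‖a‖ * ‖x' - x‖ ≤ ‖a‖ * (κ * (t * ‖b‖)) := by
      rw [norm_sub_rev]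
      gcongr
    linarith [h2.1]
  have h4 : ε / (κ + 1) * ‖(x' - x, t • b)‖ ≤ ε * (t * ‖b‖) := by
    calc ε / (κ + 1) * ‖(x' - x, t • b)‖ ≤ ε / (κ + 1) * ((κ + 1) * (t * ‖b‖)) := by gcongr
      _ = ε * (t * ‖b‖) := by field_simp
  have h5 : (t * ‖b‖) * ‖b‖ ≤ (t * ‖b‖) * (κ * ‖a‖ + ε) := by nlinarith
  exact le_of_mul_le_mul_left h5 (by positivity)

theorem AubinWith.norm_le_of_isLimitingNormal {κ : ℝ≥0} {Φ : E → Set F} {xbar : E} {ybar : F}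
    (h : AubinWith κ (svInv Φ) ybar xbar) {a : E} {b : F}
    (hn : IsLimitingNormal (svGraph Φ) (xbar, ybar) a b) : ‖b‖ ≤ κ * ‖a‖ := by
  obtain ⟨qk, ak, bk, hq, hqt, hat, hbt, hn⟩ := hn
  refine le_of_tendsto_of_tendsto hbt.norm (hat.norm.const_mul _) ?_
  filter_upwards [hqt.eventually h.eventually_norm_le] with k hk
  exact hk (hq k) _ _ (hn k)

theorem hasFDerivAt_sqrt_norm_sub_sq_add (x u : E) (c : ℝ) (h : ‖u - x‖ ^ 2 + c ≠ 0) :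
    HasFDerivAt (fun u => √(‖u - x‖ ^ 2 + c))
      (innerSL ℝ ((√(‖u - x‖ ^ 2 + c))⁻¹ • (u - x))) u := by
  have h1 := ((((hasFDerivAt_id u).sub_const x).norm_sq).add_const c).sqrt h
  refine h1.congr_fderiv ?_
  ext d
  simp
  ring

theorem exists_isFrechetNormal_of_not_aubinWith [FiniteDimensional ℝ E] [FiniteDimensional ℝ F]
    {κ : ℝ≥0} (hκ : 0 < κ) {Φ : E → Set F} (hΦ : IsClosed (svGraph Φ)) {xbar : E} {ybar : F}
    (h : ¬ AubinWith κ (svInv Φ) ybar xbar) {r : ℝ} (hr : 0 < r) :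
    ∃ q ∈ svGraph Φ, ∃ (a : E) (b : F), ‖q - (xbar, ybar)‖ ≤ r ∧
      IsFrechetNormal (svGraph Φ) q (pairFunctional a b) ∧ ‖a‖ ≤ (κ : ℝ)⁻¹ ∧ ‖b‖ = 1 := by
  have hκ' : (0 : ℝ) < κ := hκ
  set ρ : ℝ := r / (4 + 2 * κ) with hρdef
  have hρ : 0 < ρ := by positivity
  have hρr : (4 + 2 * κ) * ρ = r := by rw [hρdef]; field_simp
  simp only [AubinWith, not_exists, not_and] at h
  have h := h (ball ybar ρ) (ball_mem_nhds _ hρ) (ball xbar ρ) (ball_mem_nhds _ hρ)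
  push Not at h
  obtain ⟨y, hy, y', hy', x, ⟨hxy, hx⟩, hfar⟩ := h
  have hclosed : IsClosed (svInv Φ y) :=
    hΦ.preimage (f := fun x : E => (x, y)) (by fun_prop)
  obtain ⟨δ, hδ, hδρ, hδκ, hδfar⟩ : ∃ δ : ℝ, 0 < δ ∧ δ ≤ ρ ∧ δ ≤ κ * ρ ∧
      ∀ x' ∈ svInv Φ y, κ * ‖y - y'‖ + δ < ‖x - x'‖ := by
    rcases (svInv Φ y).eq_empty_or_nonempty with he | hne
    · exact ⟨min ρ (κ * ρ), lt_min hρ (by positivity), min_le_left _ _, min_le_right _ _,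
        by simp [he]⟩
    · obtain ⟨x₀, hx₀, hmin⟩ := hclosed.exists_infDist_eq_dist hne x
      have hgap := hfar x₀ hx₀
      refine ⟨min (min ρ (κ * ρ)) ((‖x - x₀‖ - κ * ‖y - y'‖) / 2), lt_min (lt_min hρ
        (by positivity)) (by linarith), (min_le_left _ _).trans (min_le_left _ _),
        (min_le_left _ _).trans (min_le_right _ _), fun x' hx' => ?_⟩
      have h1 := infDist_le_dist_of_mem (x := x) hx'
      rw [hmin, dist_eq_norm, dist_eq_norm] at h1
      have := min_le_right (min ρ (κ * ρ)) ((‖x - x₀‖ - κ * ‖y - y'‖) / 2)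
      linarith
  set φ : E × F → ℝ := fun q => √(‖q.2 - y‖ ^ 2 + 0) + (κ : ℝ)⁻¹ * √(‖q.1 - x‖ ^ 2 + δ ^ 2)
    with hφdef
  have hφc : Continuous φ := by fun_prop
  have hφ0 : φ (x, y') = ‖y - y'‖ + (κ : ℝ)⁻¹ * δ := by
    simp [hφdef, Real.sqrt_sq hδ.le, norm_sub_rev]
  have hφ1 : ∀ q, ‖q.2 - y‖ + (κ : ℝ)⁻¹ * ‖q.1 - x‖ ≤ φ q := by
    intro q
    simp only [hφdef, add_zero, Real.sqrt_sq (norm_nonneg _)]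
    gcongr
    exact Real.le_sqrt_of_sq_le (by nlinarith)
  have hbound : ∀ q, φ q ≤ φ (x, y') →
      ‖q.1 - x‖ ≤ κ * ‖y - y'‖ + δ ∧ ‖q.2 - y‖ ≤ ‖y - y'‖ + (κ : ℝ)⁻¹ * δ := by
    intro q hq
    have h1 := (hφ1 q).trans hq
    rw [hφ0] at h1
    have h2 : 0 ≤ (κ : ℝ)⁻¹ * ‖q.1 - x‖ := by positivity
    refine ⟨?_, by linarith⟩
    have h3 : (κ : ℝ)⁻¹ * ‖q.1 - x‖ ≤ (κ : ℝ)⁻¹ * (κ * ‖y - y'‖ + δ) := by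
      rw [mul_add, inv_mul_cancel_left₀ hκ'.ne']
      linarith [norm_nonneg (q.2 - y)]
    exact le_of_mul_le_mul_left h3 (by positivity)
  have hcompact : IsCompact (svGraph Φ ∩ {q | φ q ≤ φ (x, y')}) := by
    refine Metric.isCompact_of_isClosed_isBounded
      (hΦ.inter (isClosed_le hφc continuous_const)) ?_
    refine ((isBounded_closedBall (x := x) (r := κ * ‖y - y'‖ + δ)).prod
      (isBounded_closedBall (x := y) (r := ‖y - y'‖ + (κ : ℝ)⁻¹ * δ))).subset ?_
    rintro q ⟨-, hq⟩
    rw [mem_prod, mem_closedBall, mem_closedBall, dist_eq_norm, dist_eq_norm]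
    exact hbound q hq
  obtain ⟨q, ⟨hqΦ, hqle⟩, hqmin⟩ := hcompact.exists_isMinOn ⟨(x, y'), hxy, le_refl (φ (x, y'))⟩
    hφc.continuousOn
  have hmin : IsMinOn φ (svGraph Φ) q := by
    intro p hp
    by_cases hle : φ p ≤ φ (x, y')
    · exact hqmin ⟨hp, hle⟩
    · exact hqle.trans (not_le.1 hle).le
  obtain ⟨hb1, hb2⟩ := hbound q hqle
  have hne : q.2 - y ≠ 0 := by
    intro h0
    have hq1 : q.1 ∈ svInv Φ y := by
      rw [← sub_eq_zero.1 h0]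
      exact hqΦ
    have := hδfar _ hq1
    rw [norm_sub_rev x] at this
    linarith
  have hpos : 0 < ‖q.2 - y‖ := norm_pos_iff.2 hne
  have hpos' : 0 < ‖q.1 - x‖ ^ 2 + δ ^ 2 := by positivity
  have hd2 := (hasFDerivAt_sqrt_norm_sub_sq_add y q.2 0 (by positivity)).comp q
    (hasFDerivAt_snd (𝕜 := ℝ))
  have hd1 := ((hasFDerivAt_sqrt_norm_sub_sq_add x q.1 (δ ^ 2) hpos'.ne').comp q
    (hasFDerivAt_fst (𝕜 := ℝ))).const_mul (κ : ℝ)⁻¹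
  set a : E := (κ : ℝ)⁻¹ • ((√(‖q.1 - x‖ ^ 2 + δ ^ 2))⁻¹ • (q.1 - x)) with ha
  set b : F := (√(‖q.2 - y‖ ^ 2 + 0))⁻¹ • (q.2 - y) with hb
  have hd : HasFDerivAt φ (pairFunctional a b) q := by
    refine (hd2.add hd1).congr_fderiv ?_
    ext d <;> simp [pairFunctional, ha]
  have hn := hmin.isFrechetNormal_neg hd
  rw [neg_pairFunctional] at hn
  refine ⟨q, hqΦ, -a, -b, ?_, hn, ?_, ?_⟩
  · rw [mem_ball, dist_eq_norm] at hx hy hy'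
    have hyy : ‖y - y'‖ ≤ 2 * ρ := by
      have := norm_sub_le_norm_sub_add_norm_sub y ybar y'
      rw [norm_sub_rev ybar] at this
      linarith
    have hκδ : (κ : ℝ)⁻¹ * δ ≤ ρ := by
      calc (κ : ℝ)⁻¹ * δ ≤ (κ : ℝ)⁻¹ * (κ * ρ) := by gcongr
        _ = ρ := inv_mul_cancel_left₀ hκ'.ne' _
    have hκy : κ * ‖y - y'‖ ≤ κ * (2 * ρ) := by gcongr
    have hκρ : 0 < κ * ρ := by positivity
    refine max_le ?_ ?_
    · have := norm_sub_le_norm_sub_add_norm_sub q.1 x xbar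
      change ‖q.1 - xbar‖ ≤ r
      linarith
    · have := norm_sub_le_norm_sub_add_norm_sub q.2 y ybar
      change ‖q.2 - ybar‖ ≤ r
      linarith
  · rw [norm_neg, ha, norm_smul, norm_smul, norm_inv, norm_inv, Real.norm_of_nonneg hκ'.le,
      Real.norm_of_nonneg (Real.sqrt_nonneg _)]
    refine mul_le_of_le_one_right (by positivity) ?_
    rw [inv_mul_le_one₀ (Real.sqrt_pos.2 hpos')]
    exact Real.le_sqrt_of_sq_le (by nlinarith)
  · rw [norm_neg, hb, add_zero, Real.sqrt_sq hpos.le, norm_smul, norm_inv, norm_norm,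
      inv_mul_cancel₀ hpos.ne']

/-- If the Aubin property with constant `κ` fails, some limiting normal has ratio at least `κ`. -/
theorem exists_isLimitingNormal_of_not_aubinWith [FiniteDimensional ℝ E] [FiniteDimensional ℝ F]
    {κ : ℝ≥0} (hκ : 0 < κ) {Φ : E → Set F} (hΦ : IsClosed (svGraph Φ)) {xbar : E} {ybar : F}
    (h : ¬ AubinWith κ (svInv Φ) ybar xbar) :
    ∃ (a : E) (b : F), IsLimitingNormal (svGraph Φ) (xbar, ybar) a b ∧
      ‖a‖ ≤ (κ : ℝ)⁻¹ ∧ ‖b‖ = 1 :=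
  exists_isLimitingNormal_of_approx tendsto_const_nhds fun _ =>
    exists_isFrechetNormal_of_not_aubinWith hκ hΦ h (by positivity)

/-- If the Aubin property fails, some nonzero limiting normal has zero first component. -/
theorem exists_isLimitingNormal_of_not_aubin [FiniteDimensional ℝ E] [FiniteDimensional ℝ F]
    {Φ : E → Set F} (hΦ : IsClosed (svGraph Φ)) {xbar : E} {ybar : F}
    (h : ∀ κ : ℝ≥0, ¬ AubinWith κ (svInv Φ) ybar xbar) :
    ∃ b : F, IsLimitingNormal (svGraph Φ) (xbar, ybar) 0 b ∧ ‖b‖ = 1 := by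
  obtain ⟨a, b, hn, ha, hb⟩ := exists_isLimitingNormal_of_approx (Ω := svGraph Φ)
    (q := (xbar, ybar)) (rk := fun k : ℕ => (((k : ℝ≥0) + 1 : ℝ≥0) : ℝ)⁻¹) (r := 0)
    (by simpa using tendsto_one_div_add_atTop_nhds_zero_nat (𝕜 := ℝ))
    fun k => exists_isFrechetNormal_of_not_aubinWith (κ := (k : ℝ≥0) + 1) (by positivity) hΦ (h _)
      (by positivity)
  rw [norm_le_zero_iff] at ha
  exact ⟨b, ha ▸ hn, hb⟩

end MordukhovichCriterion

section ChainRule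

variable {E F : Type*} [NormedAddCommGroup E] [InnerProductSpace ℝ E]
  [NormedAddCommGroup F] [InnerProductSpace ℝ F]

/-- The map `z ↦ f z + B (G (C z))`. -/
def structuredMap (f : E → E) (B : F →L[ℝ] E) (C : E →L[ℝ] F) (G : F → Set F) : E → Set E :=
  fun z => {w | ∃ v ∈ G (C z), w = f z + B v}

/-- The restriction of `G` to the range of `C`. -/
def restrictToRange (C : E →L[ℝ] F) (G : F → Set F) : F → Set F :=
  fun u => {v | (∃ z, C z = u) ∧ v ∈ G u}

theorem isClosed_svGraph_structuredMap {f : E → E} (hf : Continuous f) {B : F →L[ℝ] E}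
    {L : E →L[ℝ] F} (hL : ∀ v, L (B v) = v) (C : E →L[ℝ] F) {G : F → Set F}
    (hG : IsClosed (svGraph G)) : IsClosed (svGraph (structuredMap f B C G)) := by
  have heq : svGraph (structuredMap f B C G) =
      (fun q : E × E => (C q.1, L (q.2 - f q.1))) ⁻¹' svGraph G ∩
        {q | B (L (q.2 - f q.1)) = q.2 - f q.1} := by
    ext ⟨z, p⟩
    constructor
    · rintro ⟨v, hv, hp⟩
      simp only at hv hp
      subst hp
      refine ⟨?_, ?_⟩
      · change L (f z + B v - f z) ∈ G (C z)
        simpa [hL] using hv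
      · change B (L (f z + B v - f z)) = f z + B v - f z
        simp [hL]
    · rintro ⟨h1, h2⟩
      change B (L (p - f z)) = p - f z at h2
      exact ⟨L (p - f z), h1, by rw [h2, add_sub_cancel]⟩
  rw [heq]
  exact (hG.preimage (by fun_prop)).inter (isClosed_eq (by fun_prop) (by fun_prop))

variable [FiniteDimensional ℝ E] [FiniteDimensional ℝ F]

/-- Every linear map between finite-dimensional spaces has a generalized inverse. -/
theorem exists_generalizedInverse (C : E →L[ℝ] F) : ∃ P : F →L[ℝ] E, ∀ x, C (P (C x)) = C x := by
  obtain ⟨g, hg⟩ := C.toLinearMap.rangeRestrict.exists_rightInverse_of_surjective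
    C.toLinearMap.range_rangeRestrict
  obtain ⟨P, hP⟩ := g.exists_extend
  refine ⟨LinearMap.toContinuousLinearMap P, fun x => ?_⟩
  have h1 : P (C x) = g (C.toLinearMap.rangeRestrict x) :=
    LinearMap.congr_fun hP (C.toLinearMap.rangeRestrict x)
  have h2 := congrArg Subtype.val (LinearMap.congr_fun hg (C.toLinearMap.rangeRestrict x))
  simpa [h1] using h2

variable {f : E → E} {f' : E →L[ℝ] E} {B : F →L[ℝ] E} {C : E →L[ℝ] F} {G : F → Set F}
  {z : E} {v : F}

open ContinuousLinearMap in
theorem isFrechetNormal_structuredMap_of_restrictToRange (hf : HasFDerivAt f f' z)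
    {L : E →L[ℝ] F} (hL : ∀ v, L (B v) = v) {w : F} {ξ : E}
    (h : IsFrechetNormal (svGraph (restrictToRange C G)) (C z, v)
      (pairFunctional w (-(adjoint B ξ)))) :
    IsFrechetNormal (svGraph (structuredMap f B C G)) (z, f z + B v)
      (pairFunctional (adjoint f' ξ + adjoint C w) (-ξ)) := by
  have hf1 : HasFDerivAt (fun q : E × E => f q.1) (f'.comp (fst ℝ E E)) (z, f z + B v) :=
    HasFDerivAt.comp (z, f z + B v) hf hasFDerivAt_fst
  have hsub := (hasFDerivAt_snd (𝕜 := ℝ) (p := (z, f z + B v))).sub hf1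
  have hC1 : HasFDerivAt (fun q : E × E => C q.1) (C.comp (fst ℝ E E)) (z, f z + B v) :=
    (C.comp (fst ℝ E E)).hasFDerivAt
  have hg := hC1.prodMk (L.hasFDerivAt.comp (z, f z + B v) hsub)
  have hh := ((innerSL ℝ w).hasFDerivAt.comp (z, f z + B v) hC1).sub
    ((innerSL ℝ ξ).hasFDerivAt.comp (z, f z + B v) hsub)
  refine IsFrechetNormal.of_mapsTo (Ω₂ := svGraph (restrictToRange C G))
    (l₂ := pairFunctional w (-(adjoint B ξ))) hg (hh.congr_fderiv ?_) ?_ ?_ ?_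
  · ext d
    · simp [pairFunctional, adjoint_inner_left]
      ring
    · simp [pairFunctional]
  · rintro ⟨z', p'⟩ ⟨v', hv', hp'⟩
    simp only at hv' hp'
    subst hp'
    refine ⟨⟨z', rfl⟩, ?_⟩
    simpa [hL] using hv'
  · rintro ⟨z', p'⟩ ⟨v', hv', hp'⟩
    simp only at hv' hp'
    subst hp'
    simp [hL, adjoint_inner_left, inner_sub_right]
    ring
  · simpa [hL] using h

variable {P : F →L[ℝ] E}

open ContinuousLinearMap in
theorem isFrechetNormal_restrictToRange_of_structuredMap (hf : HasFDerivAt f f' z)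
    (hP : ∀ x, C (P (C x)) = C x) {a ξ : E}
    (h : IsFrechetNormal (svGraph (structuredMap f B C G)) (z, f z + B v)
      (pairFunctional a (-ξ))) :
    IsFrechetNormal (svGraph (restrictToRange C G)) (C z, v)
      (pairFunctional (adjoint P (a - adjoint f' ξ)) (-(adjoint B ξ))) := by
  have hz1 : HasFDerivAt (fun q : F × F => z + P (q.1 - C z)) (P.comp (fst ℝ F F)) (C z, v) :=
    (P.hasFDerivAt.comp (C z, v) (hasFDerivAt_fst.sub_const (C z))).const_add z
  have hf1 : HasFDerivAt (fun q : F × F => f (z + P (q.1 - C z)))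
      (f'.comp (P.comp (fst ℝ F F))) (C z, v) :=
    HasFDerivAt.comp (C z, v) (by simpa using hf) hz1
  have hB1 : HasFDerivAt (fun q : F × F => B q.2) (B.comp (snd ℝ F F)) (C z, v) :=
    (B.comp (snd ℝ F F)).hasFDerivAt
  have hg := hz1.prodMk (hf1.add hB1)
  have hh := (pairFunctional a (-ξ)).hasFDerivAt.comp (C z, v) hg
  refine IsFrechetNormal.of_mapsTo (Ω₂ := svGraph (structuredMap f B C G))
    (l₂ := pairFunctional a (-ξ)) hg (hh.congr_fderiv ?_) ?_ ?_ ?_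
  · ext d
    · simp [pairFunctional, adjoint_inner_left]
      ring
    · simp [pairFunctional, adjoint_inner_left]
  · rintro ⟨u', v'⟩ ⟨⟨z', hz'⟩, hv'⟩
    simp only at hz' hv'
    subst hz'
    refine ⟨v', ?_, rfl⟩
    have hCz : C (z + P (C z' - C z)) = C z' := by
      rw [map_add, ← map_sub, hP, map_sub]
      abel
    simpa only [hCz] using hv'
  · intro y _
    simp only [Function.comp_apply, map_sub]
  · simpa using h

open ContinuousLinearMap in
theorem adjoint_adjoint_eq_of_isFrechetNormal_structuredMap (hf : HasFDerivAt f f' z)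
    (hP : ∀ x, C (P (C x)) = C x) (hv : v ∈ G (C z)) {a ξ : E}
    (h : IsFrechetNormal (svGraph (structuredMap f B C G)) (z, f z + B v)
      (pairFunctional a (-ξ))) :
    adjoint C (adjoint P (a - adjoint f' ξ)) = a - adjoint f' ξ := by
  have hz1 : HasFDerivAt (fun d : E => z + d) (ContinuousLinearMap.id ℝ E) 0 :=
    (hasFDerivAt_id (0 : E)).const_add z
  have hf1 : HasFDerivAt (fun d : E => f (z + d)) (f'.comp (ContinuousLinearMap.id ℝ E)) 0 :=
    HasFDerivAt.comp 0 (by simpa using hf) hz1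
  have hg := hz1.prodMk (hf1.add_const (B v))
  have hh := (pairFunctional a (-ξ)).hasFDerivAt.comp 0 hg
  have hK : IsFrechetNormal (C.toLinearMap.ker : Set E) 0 (innerSL ℝ (a - adjoint f' ξ)) := by
    refine IsFrechetNormal.of_mapsTo (Ω₂ := svGraph (structuredMap f B C G))
      (l₂ := pairFunctional a (-ξ)) hg (hh.congr_fderiv ?_) ?_ ?_ ?_
    · ext d
      simp [adjoint_inner_left]
      ring
    · intro d hd
      have hd0 : C d = 0 := hd
      exact ⟨v, by simpa [hd0] using hv, rfl⟩
    · intro y _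
      simp only [Function.comp_apply, map_sub]
    · simpa using h
  refine ext_inner_right ℝ fun d => ?_
  rw [adjoint_inner_left, adjoint_inner_left]
  have hker : d - P (C d) ∈ C.toLinearMap.ker := by simp [hP]
  have h0 := hK.eq_zero_of_mem_submodule hker
  rw [innerSL_apply_apply, inner_sub_right] at h0
  linarith

open ContinuousLinearMap in
theorem tendsto_adjoint_fderiv_apply (hf : ContDiff ℝ 1 f) {zk ξk : ℕ → E} {ξ : E}
    (hz : Tendsto zk atTop (𝓝 z)) (hξ : Tendsto ξk atTop (𝓝 ξ)) :
    Tendsto (fun k => adjoint (fderiv ℝ f (zk k)) (ξk k)) atTop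
      (𝓝 (adjoint (fderiv ℝ f z) ξ)) := by
  have hcont : Continuous fun x => adjoint (fderiv ℝ f x) :=
    adjoint.continuous.comp (hf.continuous_fderiv one_ne_zero)
  have happly : Continuous fun p : E × E => adjoint (fderiv ℝ f p.1) p.2 :=
    (hcont.comp continuous_fst).clm_apply continuous_snd
  have hlim := happly.tendsto (z, ξ)
  have hpair := hz.prodMk_nhds hξ
  simpa only [Function.comp_def] using hlim.comp hpair

open ContinuousLinearMap in
/-- Chain rule: the coderivative of `z ↦ f z + B (G (C z))`. -/
theorem isLimitingNormal_structuredMap_iff (hf : ContDiff ℝ 1 f) {L : E →L[ℝ] F}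
    (hL : ∀ v, L (B v) = v) (a ξ : E) :
    IsLimitingNormal (svGraph (structuredMap f B C G)) (z, f z + B v) a (-ξ) ↔
      ∃ w, IsLimitingNormal (svGraph (restrictToRange C G)) (C z, v) w (-(adjoint B ξ)) ∧
        adjoint (fderiv ℝ f z) ξ + adjoint C w = a := by
  obtain ⟨P, hP⟩ := exists_generalizedInverse C
  have hfd : ∀ x, HasFDerivAt f (fderiv ℝ f x) x := fun x =>
    (hf.differentiable one_ne_zero x).hasFDerivAt
  constructor
  · rintro ⟨qk, ak, bk, hq, hqt, hat, hbt, hn⟩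
    have hzt : Tendsto (fun k => (qk k).1) atTop (𝓝 z) := (continuous_fst.tendsto _).comp hqt
    have hpt : Tendsto (fun k => (qk k).2) atTop (𝓝 (f z + B v)) :=
      (continuous_snd.tendsto _).comp hqt
    have hξt : Tendsto (fun k => -bk k) atTop (𝓝 ξ) := by simpa using hbt.neg
    choose vk hvk hpk using hq
    have hvt : Tendsto vk atTop (𝓝 v) := by
      have h1 : Tendsto (fun k => L ((qk k).2 - f (qk k).1)) atTop
          (𝓝 (L (f z + B v - f z))) :=
        (L.continuous.tendsto _).comp (hpt.sub ((hf.continuous.tendsto z).comp hzt))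
      simpa [hpk, hL] using h1
    have hn' : ∀ k, IsFrechetNormal (svGraph (structuredMap f B C G))
        ((qk k).1, f (qk k).1 + B (vk k)) (pairFunctional (ak k) (-(-bk k))) := by
      intro k
      rw [← hpk, neg_neg]
      exact hn k
    have hwt := hat.sub (tendsto_adjoint_fderiv_apply hf hzt hξt)
    have hCw : adjoint C (adjoint P (a - adjoint (fderiv ℝ f z) ξ)) =
        a - adjoint (fderiv ℝ f z) ξ :=
      tendsto_nhds_unique (((adjoint C).continuous.comp (adjoint P).continuous).tendsto _
        |>.comp hwt) (hwt.congr fun k =>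
          (adjoint_adjoint_eq_of_isFrechetNormal_structuredMap (hfd _) hP (hvk k) (hn' k)).symm)
    refine ⟨adjoint P (a - adjoint (fderiv ℝ f z) ξ),
      ⟨fun k => (C (qk k).1, vk k),
        fun k => adjoint P (ak k - adjoint (fderiv ℝ f (qk k).1) (-bk k)),
        fun k => -(adjoint B (-bk k)), fun k => ⟨⟨_, rfl⟩, hvk k⟩,
        ((C.continuous.tendsto z).comp hzt).prodMk_nhds hvt,
        ((adjoint P).continuous.tendsto _).comp hwt,
        (((adjoint B).continuous.tendsto _).comp hξt).neg, fun k =>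
        isFrechetNormal_restrictToRange_of_structuredMap (hfd _) hP (hn' k)⟩, ?_⟩
    rw [hCw]
    abel
  · rintro ⟨w, ⟨qk, wk, ck, hq, hqt, hwt, hct, hn⟩, rfl⟩
    have hut : Tendsto (fun k => (qk k).1) atTop (𝓝 (C z)) := (continuous_fst.tendsto _).comp hqt
    have hvt : Tendsto (fun k => (qk k).2) atTop (𝓝 v) := (continuous_snd.tendsto _).comp hqt
    set zk : ℕ → E := fun k => z + P ((qk k).1 - C z) with hzk
    set ξk : ℕ → E := fun k => ξ - adjoint L (ck k + adjoint B ξ) with hξk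
    have hzt : Tendsto zk atTop (𝓝 z) := by
      have h1 := ((P.continuous.tendsto _).comp (hut.sub_const (C z))).const_add z
      rwa [sub_self, map_zero, add_zero] at h1
    have hξt : Tendsto ξk atTop (𝓝 ξ) := by
      have h1 := (((adjoint L).continuous.tendsto _).comp
        (hct.add_const (adjoint B ξ))).const_sub ξ
      rwa [neg_add_cancel, map_zero, sub_zero] at h1
    have hCz : ∀ k, C (zk k) = (qk k).1 := by
      intro k
      obtain ⟨z', hz'⟩ := (hq k).1
      simp only [hzk]
      rw [← hz', map_add, ← map_sub, hP, map_sub]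
      abel
    have hBL : ∀ c, adjoint B (adjoint L c) = c := by
      intro c
      refine ext_inner_right ℝ fun d => ?_
      rw [adjoint_inner_left, adjoint_inner_left, hL]
    have hBξ : ∀ k, -(adjoint B (ξk k)) = ck k := by
      intro k
      simp only [hξk, map_sub, hBL]
      abel
    refine ⟨fun k => (zk k, f (zk k) + B (qk k).2),
      fun k => adjoint (fderiv ℝ f (zk k)) (ξk k) + adjoint C (wk k), fun k => -ξk k,
      fun k => ⟨(qk k).2, ?_, rfl⟩, ?_, ?_, hξt.neg, fun k => ?_⟩
    · simp only [hCz]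
      exact (hq k).2
    · exact hzt.prodMk_nhds (((hf.continuous.tendsto z).comp hzt).add
        ((B.continuous.tendsto v).comp hvt))
    · exact (tendsto_adjoint_fderiv_apply hf hzt hξt).add (((adjoint C).continuous.tendsto w).comp hwt)
    · refine isFrechetNormal_structuredMap_of_restrictToRange (hfd _) hL ?_
      rw [hBξ, hCz]
      exact hn k

end ChainRule

theorem toEuclideanLin_nonsing_inv_mul_transpose {m n : ℕ} {B : Matrix (Fin n) (Fin m) ℝ}
    (hB : Function.Injective (Matrix.toEuclideanLin B)) (v : EuclideanSpace ℝ (Fin m)) :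
    Matrix.toEuclideanLin ((B.transpose * B)⁻¹ * B.transpose) (Matrix.toEuclideanLin B v) = v := by
  have hinj : Function.Injective B.mulVec := fun x y hxy =>
    WithLp.toLp_injective 2 (hB (congrArg (WithLp.toLp 2) hxy))
  have hpd := Matrix.PosDef.conjTranspose_mul_self B hinj
  rw [Matrix.conjTranspose_eq_transpose_of_trivial] at hpd
  have hdet : IsUnit (B.transpose * B).det := (Matrix.isUnit_iff_isUnit_det _).1 hpd.isUnit
  simp [Matrix.toLpLin_apply, Matrix.mulVec_mulVec, Matrix.nonsing_inv_mul _ hdet]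

theorem adjoint_toEuclideanLin_apply {m n : ℕ} (A : Matrix (Fin n) (Fin m) ℝ)
    (ξ : EuclideanSpace ℝ (Fin n)) :
    ContinuousLinearMap.adjoint (LinearMap.toContinuousLinearMap (Matrix.toEuclideanLin A)) ξ =
      Matrix.toEuclideanLin A.transpose ξ := by
  refine ext_inner_right ℝ fun d => ?_
  rw [ContinuousLinearMap.adjoint_inner_left, ← Matrix.conjTranspose_eq_transpose_of_trivial,
    Matrix.toEuclideanLin_conjTranspose_eq_adjoint, LinearMap.adjoint_inner_left]
  rfl

/-- Aubin property criterion for the solution mapping of the generalized equation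
`f(z) + B F(Cz) ∋ p`, together with the formula for the Lipschitz modulus. -/
theorem aubin_criterion_for_GE {n m : ℕ}
    (f : EuclideanSpace ℝ (Fin n) → EuclideanSpace ℝ (Fin n)) (hf : ContDiff ℝ 1 f)
    (Fm : EuclideanSpace ℝ (Fin m) → Set (EuclideanSpace ℝ (Fin m)))
    (hFm : IsClosed (svGraph Fm))
    (B : Matrix (Fin n) (Fin m) ℝ) (hB : Function.Injective (Matrix.toEuclideanLin B))
    (C : Matrix (Fin m) (Fin n) ℝ)
    (Phi : EuclideanSpace ℝ (Fin n) → Set (EuclideanSpace ℝ (Fin n)))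
    (hPhi : Phi = fun z =>
      {w | ∃ v ∈ Fm (Matrix.toEuclideanLin C z), w = f z + Matrix.toEuclideanLin B v})
    (FC : EuclideanSpace ℝ (Fin m) → Set (EuclideanSpace ℝ (Fin m)))
    (hFC : FC = fun u => {v | (∃ z, Matrix.toEuclideanLin C z = u) ∧ v ∈ Fm u})
    (zbar pbar : EuclideanSpace ℝ (Fin n)) (hzp : pbar ∈ Phi zbar)
    (vbar : EuclideanSpace ℝ (Fin m))
    (hvbar : vbar = Matrix.toEuclideanLin ((B.transpose * B)⁻¹ * B.transpose) (pbar - f zbar)) :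
    ((∃ κ : ℝ≥0, AubinWith κ (svInv Phi) pbar zbar) ↔
      ∀ ξ : EuclideanSpace ℝ (Fin n),
        (0 : EuclideanSpace ℝ (Fin n)) ∈
          (fun w => ContinuousLinearMap.adjoint (fderiv ℝ f zbar) ξ +
              Matrix.toEuclideanLin C.transpose w) ''
            coDeriv FC (Matrix.toEuclideanLin C zbar) vbar
              (Matrix.toEuclideanLin B.transpose ξ) → ξ = 0) ∧
    lipMod (svInv Phi) pbar zbar =
      ⨆ (ξ : EuclideanSpace ℝ (Fin n))
        (_ : ((fun w => ContinuousLinearMap.adjoint (fderiv ℝ f zbar) ξ +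
              Matrix.toEuclideanLin C.transpose w) ''
            coDeriv FC (Matrix.toEuclideanLin C zbar) vbar
              (Matrix.toEuclideanLin B.transpose ξ) ∩
            Metric.closedBall (0 : EuclideanSpace ℝ (Fin n)) 1).Nonempty),
        (‖ξ‖₊ : ℝ≥0∞) := by
  obtain rfl : vbar = _ := hvbar
  have hleft : ∀ v, LinearMap.toContinuousLinearMap
      (Matrix.toEuclideanLin ((B.transpose * B)⁻¹ * B.transpose))
      (LinearMap.toContinuousLinearMap (Matrix.toEuclideanLin B) v) = v :=
    toEuclideanLin_nonsing_inv_mul_transpose hB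
  have hPhi' : Phi = structuredMap f (LinearMap.toContinuousLinearMap (Matrix.toEuclideanLin B))
      (LinearMap.toContinuousLinearMap (Matrix.toEuclideanLin C)) Fm := hPhi
  have hclosed : IsClosed (svGraph Phi) := by
    rw [hPhi']
    exact isClosed_svGraph_structuredMap hf.continuous hleft _ hFm
  have key : ∀ a ξ : EuclideanSpace ℝ (Fin n),
      IsLimitingNormal (svGraph Phi) (zbar, pbar) a (-ξ) ↔
        a ∈ (fun w => ContinuousLinearMap.adjoint (fderiv ℝ f zbar) ξ +
              Matrix.toEuclideanLin C.transpose w) ''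
            coDeriv FC (Matrix.toEuclideanLin C zbar)
              (Matrix.toEuclideanLin ((B.transpose * B)⁻¹ * B.transpose) (pbar - f zbar))
              (Matrix.toEuclideanLin B.transpose ξ) := by
    intro a ξ
    rw [hPhi] at hzp
    obtain ⟨v, -, rfl⟩ := hzp
    have hchain := isLimitingNormal_structuredMap_iff
      (C := LinearMap.toContinuousLinearMap (Matrix.toEuclideanLin C)) (G := Fm) (z := zbar)
      (v := v) hf hleft a ξ
    rw [← hPhi'] at hchain
    rw [add_sub_cancel_left, toEuclideanLin_nonsing_inv_mul_transpose hB]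
    refine hchain.trans (exists_congr fun w => ?_)
    rw [mem_coDeriv_iff, hFC, adjoint_toEuclideanLin_apply, adjoint_toEuclideanLin_apply]
    rfl
  simp only [Set.Nonempty, Set.mem_inter_iff, ← key]
  refine ⟨⟨?_, ?_⟩, le_antisymm ?_ ?_⟩
  · rintro ⟨κ, hκ⟩ ξ hξ
    simpa using hκ.norm_le_of_isLimitingNormal hξ
  · intro h
    by_contra hno
    obtain ⟨b, hb, hb1⟩ := exists_isLimitingNormal_of_not_aubin hclosed (not_exists.1 hno)
    have hb0 := h (-b) (by rwa [neg_neg])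
    rw [neg_eq_zero] at hb0
    simp [hb0] at hb1
  · refine ENNReal.le_of_forall_nnreal_lt fun κ hκ => ?_
    rcases eq_or_ne κ 0 with rfl | hκ0
    · simp
    have hno : ¬ AubinWith κ (svInv Phi) pbar zbar := fun hA =>
      hκ.not_ge (iInf₂_le (f := fun (κ : ℝ≥0) (_ : AubinWith κ (svInv Phi) pbar zbar) =>
        (κ : ℝ≥0∞)) κ hA)
    have hκpos : (0 : ℝ) < κ := NNReal.coe_pos.2 (pos_iff_ne_zero.2 hκ0)
    obtain ⟨a, b, hn, ha, hb⟩ :=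
      exists_isLimitingNormal_of_not_aubinWith (pos_iff_ne_zero.2 hκ0) hclosed hno
    refine le_iSup₂_of_le (-((κ : ℝ) • b)) ⟨(κ : ℝ) • a, ?_, ?_⟩ (le_of_eq ?_)
    · rw [neg_neg]
      exact hn.smul hκpos
    · rw [mem_closedBall_zero_iff, norm_smul, Real.norm_of_nonneg hκpos.le]
      calc (κ : ℝ) * ‖a‖ ≤ κ * (κ : ℝ)⁻¹ := by gcongr
        _ = 1 := mul_inv_cancel₀ hκpos.ne'
    · rw [ENNReal.coe_inj, ← NNReal.coe_inj, coe_nnnorm, norm_neg, norm_smul, hb,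
        Real.norm_of_nonneg hκpos.le, mul_one]
  · refine iSup₂_le fun ξ hξ => le_iInf₂ fun κ hκ => ?_
    obtain ⟨a, hn, ha⟩ := hξ
    have h1 := hκ.norm_le_of_isLimitingNormal hn
    rw [norm_neg] at h1
    rw [mem_closedBall_zero_iff] at ha
    rw [ENNReal.coe_le_coe, ← NNReal.coe_le_coe, coe_nnnorm]
    exact h1.trans (mul_le_of_le_one_right κ.coe_nonneg ha)

end
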